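/- Let i ∈ Σ_{n+1} and let v_1, …, v_ν be the primitive inward normal vectors of the string inequalities defining the string cone C_i (one inequality per rigorous path). Then no v_j is contained in the convex cone generated by the other vectors v_1, …, v_{j−1}, v_{j+1}, …, v_ν. -/

import Mathlib

open scoped Classical

noncomputable section

namespace StringPolytope

/-! ### Words, reduced words, two-moves -/

/-- the simple transposition `s_a = (a, a+1)` acting on `ℕ` (wires are `1, …, n+1`). -/
def sTrans (a : ℕ) : Equiv.Perm ℕ := Equiv.swap a (a + 1)

/-- product `s_{i₁} ⋯ s_{i_N}` of the simple transpositions of a word. -/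
def wordProd (w : List ℕ) : Equiv.Perm ℕ := (w.map sTrans).prod

/-- the longest element `w₀` of the symmetric group on `{1, …, n+1}`,
sending `k ↦ n + 2 - k` there and fixing everything else. -/
def longestPerm (n : ℕ) : Equiv.Perm ℕ :=
  Function.Involutive.toPerm
    (fun k => if 1 ≤ k ∧ k ≤ n + 1 then n + 2 - k else k)
    (by intro k; dsimp only; split_ifs <;> omega)

/-- `w ∈ Σ_{n+1}`: a reduced word of the longest element of `S_{n+1}`,
i.e. a word over `[n] = {1,…,n}` of length `N = n(n+1)/2` whose product is `w₀`. -/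
def IsReduced (n : ℕ) (w : List ℕ) : Prop :=
  w.length = n * (n + 1) / 2 ∧ (∀ a ∈ w, 1 ≤ a ∧ a ≤ n) ∧ wordProd w = longestPerm n

/-- a single 2-move: exchange two adjacent letters `(a, b)` with `|a - b| > 1`. -/
def TwoMoveStep (w w' : List ℕ) : Prop :=
  ∃ u v a b, (a + 1 < b ∨ b + 1 < a) ∧ w = u ++ a :: b :: v ∧ w' = u ++ b :: a :: v

/-- 2-move equivalence of words. -/
def TwoMoveEquiv : List ℕ → List ℕ → Prop := Relation.ReflTransGen TwoMoveStep

/-- `A_n = (1, 2, …, n)`. -/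
def ascWord (n : ℕ) : List ℕ := (List.range n).map (· + 1)

/-- `D_n = (n, n-1, …, 1)`. -/
def descWord (n : ℕ) : List ℕ := (ascWord n).reverse

/-! ### The wiring diagram -/

/-- the letter `i_j` of `w` (1-based index `j`); the node `t_j` lies in column `i_j`. -/
def letterAt (w : List ℕ) (j : ℕ) : ℕ := w.getD (j - 1) 0

/-- `1 ≤ j ≤ N`: `t_j` is an actual node of the diagram. -/
def ValidNode (w : List ℕ) (j : ℕ) : Prop := 1 ≤ j ∧ j ≤ w.length

/-- the column-to-wire assignment just above node `t_j`
(at the top of the diagram, wire `k` is in column `k`). -/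
def stateAbove (w : List ℕ) (j : ℕ) : Equiv.Perm ℕ := wordProd (w.take (j - 1))

/-- the column-to-wire assignment just below node `t_j`. -/
def stateBelow (w : List ℕ) (j : ℕ) : Equiv.Perm ℕ := wordProd (w.take j)

/-- one of the two wires crossing at node `t_j` (the one leaving upward-left). -/
def wireX (w : List ℕ) (j : ℕ) : ℕ := stateAbove w j (letterAt w j)

/-- the other wire crossing at node `t_j` (the one leaving upward-right). -/
def wireY (w : List ℕ) (j : ℕ) : ℕ := stateAbove w j (letterAt w j + 1)

/-- the node `t_j` lies on the wire `ℓ_r`. -/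
def NodeOnWire (w : List ℕ) (j r : ℕ) : Prop := wireX w j = r ∨ wireY w j = r

/-- given one wire `r` at node `t_j`, the other wire crossing there. -/
def otherWire (w : List ℕ) (j r : ℕ) : ℕ := if wireX w j = r then wireY w j else wireX w j

/-- the column of wire `ℓ_r` at the height of node `t_j`. -/
def wireCol (w : List ℕ) (j r : ℕ) : ℕ := (stateBelow w j).symm r

/-- node `t_j` lies strictly below the wire `ℓ_{n+1}`
(which runs from the bottom-left corner to the top-right corner). -/
def BelowWireLast (n : ℕ) (w : List ℕ) (j : ℕ) : Prop :=
  wireCol w j (n + 1) < letterAt w j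

/-- node `t_j` lies strictly above the wire `ℓ_{n+1}`. -/
def AboveWireLast (n : ℕ) (w : List ℕ) (j : ℕ) : Prop :=
  letterAt w j + 1 < wireCol w j (n + 1)

/-- node `t_j` lies strictly below the wire `ℓ_1`
(which runs from the bottom-right corner to the top-left corner). -/
def BelowWireOne (w : List ℕ) (j : ℕ) : Prop :=
  letterAt w j + 1 < wireCol w j 1

/-- node `t_j` lies strictly above the wire `ℓ_1`. -/
def AboveWireOne (w : List ℕ) (j : ℕ) : Prop :=
  wireCol w j 1 < letterAt w j

/-! ### Rigorous (Gleizer–Postnikov) paths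

A path in `G(i, k)` is encoded by `k` together with the list of its switching
nodes, in order of travel.  Wires `ℓ_1, …, ℓ_k` are oriented upward
(decreasing node index) and the remaining wires downward. -/

/-- the (1-based indices of the) nodes lying on wire `ℓ_r`, in order of increasing index. -/
def nodesOn (w : List ℕ) (r : ℕ) : List ℕ :=
  ((List.range w.length).map (· + 1)).filter (fun j => decide (NodeOnWire w j r))

/-- nodes on wire `ℓ_r` strictly between the nodes `t_a` and `t_b`. -/
def segList (w : List ℕ) (r a b : ℕ) : List ℕ :=
  (nodesOn w r).filter (fun j => decide (min a b < j ∧ j < max a b))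

/-- nodes on wire `ℓ_r` strictly below the node `t_a`. -/
def tailList (w : List ℕ) (r a : ℕ) : List ℕ :=
  (nodesOn w r).filter (fun j => decide (a < j))

/-- a forbidden fragment of `G(i, k)`: the path passes straight through node `t_j`
travelling along the wire `ℓ_r`, where the other wire `ℓ_b` crossing there has the same
orientation as `ℓ_r` and (`r < b` if both upward, `r > b` if both downward). -/
def Forbidden (w : List ℕ) (k j r : ℕ) : Prop :=
  (r ≤ k ∧ otherWire w j r ≤ k ∧ r < otherWire w j r) ∨
  (k < r ∧ k < otherWire w j r ∧ otherWire w j r < r)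

/-- travelling in `G(i,k)`: currently on wire `ℓ_r` at node `t_a` (just switched there),
with future switching nodes `ms`; the travel is legal and ends at `L_{k+1}`. -/
def TravelOK (w : List ℕ) (k : ℕ) : ℕ → ℕ → List ℕ → Prop
  | r, a, [] => r = k + 1 ∧ ∀ j ∈ tailList w r a, ¬ Forbidden w k j r
  | r, a, m :: ms =>
      ValidNode w m ∧ NodeOnWire w m r ∧
      (if r ≤ k then m < a else a < m) ∧
      (∀ j ∈ segList w r a m, ¬ Forbidden w k j r) ∧
      TravelOK w k (otherWire w m r) m ms

/-- all nodes visited after the switch at node `t_a` onto wire `ℓ_r`. -/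
def visitTail (w : List ℕ) : ℕ → ℕ → List ℕ → List ℕ
  | r, a, [] => tailList w r a
  | r, a, m :: ms => segList w r a m ++ m :: visitTail w (otherWire w m r) m ms

/-- the list of all nodes visited by the path (switching nodes and straight passes). -/
def visitList (w : List ℕ) (k : ℕ) : List ℕ → List ℕ
  | [] => []
  | m :: ms => tailList w k m ++ m :: visitTail w (otherWire w m k) m ms

/-- `(k, ms)` encodes a rigorous (Gleizer–Postnikov) path in `G(i, k)`:
it starts at `L_k` going up the wire `ℓ_k`, switches wires exactly at the nodes
listed in `ms`, respects the orientation, ends at `L_{k+1}`, contains no forbidden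
fragment and passes through each node at most once. -/
def IsGPPath (n : ℕ) (w : List ℕ) (k : ℕ) (ms : List ℕ) : Prop :=
  1 ≤ k ∧ k ≤ n ∧
  (match ms with
   | [] => False
   | m :: rest =>
       ValidNode w m ∧ NodeOnWire w m k ∧
       (∀ j ∈ tailList w k m, ¬ Forbidden w k j k) ∧
       TravelOK w k (otherWire w m k) m rest) ∧
  (visitList w k ms).Nodup

/-- the set `GP(i)` of all rigorous paths of `G(i)`. -/
def GP (n : ℕ) (w : List ℕ) : Set (ℕ × List ℕ) := {p | IsGPPath n w p.1 p.2}

/-- `|GP(i)|`, the number of rigorous paths. -/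
def numGP (n : ℕ) (w : List ℕ) : ℕ := (GP n w).ncard

/-- the successive switches of a path: `(node, from-wire, to-wire)`. -/
def pathSwitches (w : List ℕ) : ℕ → List ℕ → List (ℕ × ℕ × ℕ)
  | _, [] => []
  | r, m :: ms => (m, r, otherWire w m r) :: pathSwitches w (otherWire w m r) ms

/-- the wire-expression of a path: the successive wires travelled. -/
def wireSeq (w : List ℕ) : ℕ → List ℕ → List ℕ
  | r, [] => [r]
  | r, m :: ms => r :: wireSeq w (otherWire w m r) ms

/-- the peaks of a path: switching nodes where the path switches from an
upward wire to a downward wire. -/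
def peaks (w : List ℕ) (k : ℕ) (ms : List ℕ) : List ℕ :=
  ((pathSwitches w k ms).filter (fun e => decide (e.2.1 ≤ k ∧ k < e.2.2))).map (·.1)

/-! ### String cone, `λ`-cone, string polytope -/

/-- `N = n(n+1)/2`, the number of nodes. -/
abbrev Dim (n : ℕ) : ℕ := n * (n + 1) / 2

/-- the coefficient `a_j` of `t_j` in the string inequality of the path `(k, ms)`:
`+1` if the path switches at `t_j` from `ℓ_r` to `ℓ_s` with `r < s`,
`-1` if it switches with `r > s`, and `0` otherwise. -/
def coeff (w : List ℕ) (k : ℕ) (ms : List ℕ) (j : ℕ) : ℝ :=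
  ((pathSwitches w k ms).map (fun e =>
    if e.1 = j then (if e.2.1 < e.2.2 then (1 : ℝ) else -1) else 0)).sum

/-- the (primitive inward normal) coefficient vector of the string inequality of a path. -/
def normalVec (n : ℕ) (w : List ℕ) (p : ℕ × List ℕ) : Fin (Dim n) → ℝ :=
  fun j => coeff w p.1 p.2 ((j : ℕ) + 1)

/-- the left-hand side `∑ a_j t_j` of the string inequality of the path `p`. -/
def stringIneq (n : ℕ) (w : List ℕ) (p : ℕ × List ℕ) (t : Fin (Dim n) → ℝ) : ℝ :=
  ∑ j : Fin (Dim n), normalVec n w p j * t j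

/-- the string cone `C_i ⊆ ℝ^N`. -/
def stringCone (n : ℕ) (w : List ℕ) : Set (Fin (Dim n) → ℝ) :=
  {t | ∀ p ∈ GP n w, 0 ≤ stringIneq n w p t}

/-- the polyhedron cut out by all string inequalities except the one of `p₀`. -/
def stringConeExcept (n : ℕ) (w : List ℕ) (p₀ : ℕ × List ℕ) : Set (Fin (Dim n) → ℝ) :=
  {t | ∀ p ∈ GP n w, p ≠ p₀ → 0 ≤ stringIneq n w p t}

/-- the coefficient `a_k` in the `λ`-inequality of node `t_j`:
`1` if `t_k` is one column left or right of `t_j`, `-2` if in the same column. -/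
def lamCoeff (w : List ℕ) (j k : ℕ) : ℝ :=
  if letterAt w k = letterAt w j then -2
  else if letterAt w k = letterAt w j + 1 ∨ letterAt w k + 1 = letterAt w j then 1
  else 0

/-- the `λ`-inequality of node `t_{j+1}`:
`t_j ≤ λ_{i_j} + ∑_{k > j} a_k t_k`. -/
def LamIneq (n : ℕ) (w : List ℕ) (lam : ℕ → ℤ) (j : Fin (Dim n)) (t : Fin (Dim n) → ℝ) : Prop :=
  t j ≤ (lam (letterAt w ((j : ℕ) + 1)) : ℝ) +
    ∑ k : Fin (Dim n),
      (if (j : ℕ) < (k : ℕ) then lamCoeff w ((j : ℕ) + 1) ((k : ℕ) + 1) else 0) * t k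

/-- the `λ`-cone `C_i^λ ⊆ ℝ^N`. -/
def lamCone (n : ℕ) (w : List ℕ) (lam : ℕ → ℤ) : Set (Fin (Dim n) → ℝ) :=
  {t | ∀ j, LamIneq n w lam j t}

/-- the polyhedron cut out by all `λ`-inequalities except the one of `j₀`. -/
def lamConeExcept (n : ℕ) (w : List ℕ) (lam : ℕ → ℤ) (j₀ : Fin (Dim n)) :
    Set (Fin (Dim n) → ℝ) :=
  {t | ∀ j, j ≠ j₀ → LamIneq n w lam j t}

/-- the string polytope `Δ_i(λ) = C_i ∩ C_i^λ`. -/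
def stringPolytope (n : ℕ) (w : List ℕ) (lam : ℕ → ℤ) : Set (Fin (Dim n) → ℝ) :=
  stringCone n w ∩ lamCone n w lam

/-- `λ = λ_1 ϖ_1 + ⋯ + λ_n ϖ_n` is a dominant integral weight: all `λ_j ≥ 0`. -/
def Dominant (n : ℕ) (lam : ℕ → ℤ) : Prop := ∀ j, 1 ≤ j → j ≤ n → 0 ≤ lam j

/-- `λ` is a regular dominant integral weight: all `λ_j > 0`. -/
def RegularDominant (n : ℕ) (lam : ℕ → ℤ) : Prop := ∀ j, 1 ≤ j → j ≤ n → 0 < lam j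

/-! ### Unimodular equivalence, Gelfand–Cetlin polytope, facets -/

/-- `P` and `Q` are unimodularly equivalent: `Q = M(P) + v` with `M ∈ GL(m, ℤ)`, `v ∈ ℤ^m`. -/
def UnimodEquiv {m : ℕ} (P Q : Set (Fin m → ℝ)) : Prop :=
  ∃ (M : Matrix (Fin m) (Fin m) ℤ) (v : Fin m → ℤ), IsUnit M.det ∧
    Q = (fun x i => (∑ j, (M i j : ℝ) * x j) + (v i : ℝ)) '' P

/-- the entry `x_{k,j}` (`1 ≤ j ≤ k ≤ n+1`) of a Gelfand–Cetlin pattern, where the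
top row is `x_{n+1,j} = λ_j + ⋯ + λ_n` and `x_{n+1,n+1} = 0`; the pair `(k, j)` is
encoded as the coordinate `k(k-1)/2 + (j-1)` of `ℝ^N`. -/
def gcX (n : ℕ) (lam : ℕ → ℤ) (x : Fin (Dim n) → ℝ) (k j : ℕ) : ℝ :=
  if k = n + 1 then (if j ≤ n then ∑ t ∈ Finset.Icc j n, (lam t : ℝ) else 0)
  else if h : k * (k - 1) / 2 + (j - 1) < Dim n then x ⟨k * (k - 1) / 2 + (j - 1), h⟩ else 0

/-- the Gelfand–Cetlin polytope `GC(λ) ⊆ ℝ^N`. -/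
def GCPolytope (n : ℕ) (lam : ℕ → ℤ) : Set (Fin (Dim n) → ℝ) :=
  {x | ∀ k j, 1 ≤ k → k ≤ n → 1 ≤ j → j ≤ k →
      gcX n lam x k j ≤ gcX n lam x (k + 1) j ∧
      gcX n lam x (k + 1) (j + 1) ≤ gcX n lam x k j}

/-- a face of a convex set: a convex extreme subset. -/
def IsFaceSet {m : ℕ} (S F : Set (Fin m → ℝ)) : Prop := IsExtreme ℝ S F ∧ Convex ℝ F

/-- a facet: a maximal proper face. -/
def IsFacet {m : ℕ} (S F : Set (Fin m → ℝ)) : Prop :=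
  IsFaceSet S F ∧ F ≠ S ∧ ∀ G, IsFaceSet S G → G ≠ S → F ⊆ G → F = G

/-- the number of facets. -/
def numFacets {m : ℕ} (S : Set (Fin m → ℝ)) : ℕ := {F | IsFacet S F}.ncard

/-- combinatorial equivalence: an inclusion-preserving bijection between face lattices. -/
def CombEquiv {m : ℕ} (S T : Set (Fin m → ℝ)) : Prop :=
  ∃ e : {F // IsFaceSet S F} ≃ {F // IsFaceSet T F},
    ∀ F G : {F // IsFaceSet S F}, F.1 ⊆ G.1 ↔ (e F).1 ⊆ (e G).1

/-! ### Indices, contractions and extensions -/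

/-- the `D`-index `ind_D(i) = |i_D^+|` for a decomposition `i ∼ i_D^- D_n i_D^+`
(independent of the decomposition). -/
def indD (n : ℕ) (w : List ℕ) : ℕ :=
  sInf {s | ∃ u v : List ℕ, v.length = s ∧ TwoMoveEquiv w (u ++ descWord n ++ v)}

/-- the `A`-index `ind_A(i) = |i_A^+|` for a decomposition `i ∼ i_A^- A_n i_A^+`. -/
def indA (n : ℕ) (w : List ℕ) : ℕ :=
  sInf {s | ∃ u v : List ℕ, v.length = s ∧ TwoMoveEquiv w (u ++ ascWord n ++ v)}

/-- `w'` is a `D`-contraction `C_D(w) = i_D^- (i_D^+ - 1)` of `w ∈ Σ_{n+1}`. -/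
def IsContractionD (n : ℕ) (w w' : List ℕ) : Prop :=
  ∃ u v : List ℕ, TwoMoveEquiv w (u ++ descWord n ++ v) ∧ w' = u ++ v.map (· - 1)

/-- `w'` is an `A`-contraction `C_A(w) = (i_A^- - 1) i_A^+` of `w ∈ Σ_{n+1}`. -/
def IsContractionA (n : ℕ) (w w' : List ℕ) : Prop :=
  ∃ u v : List ℕ, TwoMoveEquiv w (u ++ ascWord n ++ v) ∧ w' = u.map (· - 1) ++ v

/-- the `D`-extension `E_D(s) : Σ_{n+1} → Σ_{n+2}`,
`i = i^-(s) i^+(s) ↦ i^-(s) D_{n+1} (i^+(s) + 1)` where `|i^+(s)| = s`. -/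
def extD (n : ℕ) (s : ℕ) (w : List ℕ) : List ℕ :=
  w.take (w.length - s) ++ descWord (n + 1) ++ (w.drop (w.length - s)).map (· + 1)

/-- the `A`-extension `E_A(s) : Σ_{n+1} → Σ_{n+2}`,
`i = i^-(s) i^+(s) ↦ (i^-(s) + 1) A_{n+1} i^+(s)`. -/
def extA (n : ℕ) (s : ℕ) (w : List ℕ) : List ℕ :=
  (w.take (w.length - s)).map (· + 1) ++ ascWord (n + 1) ++ w.drop (w.length - s)

/-- there exists `(σ_1, …, σ_n) ∈ {A, D}^n` (here `true = D`, `false = A`) such that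
`ind_{σ_k}(C_{σ_{k+1}} ∘ ⋯ ∘ C_{σ_n}(i)) = 0` for all `k = n, …, 1`. -/
def SimplicialWord (n : ℕ) (w : List ℕ) : Prop :=
  ∃ (σ : ℕ → Bool) (c : ℕ → List ℕ), c n = w ∧
    ∀ k, 1 ≤ k → k ≤ n →
      (if σ k then IsContractionD k (c k) (c (k - 1)) ∧ indD k (c k) = 0
       else IsContractionA k (c k) (c (k - 1)) ∧ indA k (c k) = 0)


/-- the `D`-coindex `coind_D(i) = |i_D^-|`. -/
def coindD (n : ℕ) (w : List ℕ) : ℕ :=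
  sInf {s | ∃ u v : List ℕ, u.length = s ∧ TwoMoveEquiv w (u ++ descWord n ++ v)}

/-- the `A`-coindex `coind_A(i) = |i_A^-|`. -/
def coindA (n : ℕ) (w : List ℕ) : ℕ :=
  sInf {s | ∃ u v : List ℕ, u.length = s ∧ TwoMoveEquiv w (u ++ ascWord n ++ v)}

/-- the `a`-th (0-based) coordinate of a point of `ℝ^N`. -/
def entry (n : ℕ) (t : Fin (Dim n) → ℝ) (a : ℕ) : ℝ :=
  if h : a < Dim n then t ⟨a, h⟩ else 0

/-- the product of cones
`t_1 ≥ 0`, `t_2 ≥ t_3 ≥ 0`, …, `t_{N-n+1} ≥ ⋯ ≥ t_N ≥ 0` (in `ℝ^N`, 1-based: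
for `k = 1, …, n` the chain `t_{k(k-1)/2+1} ≥ ⋯ ≥ t_{k(k-1)/2+k} ≥ 0`). -/
def chainCone (n : ℕ) : Set (Fin (Dim n) → ℝ) :=
  {t | ∀ k j, 1 ≤ k → k ≤ n → 1 ≤ j → j ≤ k →
    (if j = k then 0 else entry n t (k * (k - 1) / 2 + j)) ≤
      entry n t (k * (k - 1) / 2 + (j - 1))}

/-! A coefficient vector records where a path leaves and joins each wire, so the flow of the path
through every edge of the wiring diagram is a linear functional of it, and these functionals
recover the vector. At the bottom of the diagram they give the simple root `e_k - e_{k+1}`; as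
simple roots are linearly independent, a nonnegative combination of the other vectors equal to that
of a path in `G(i, k)` is a convex combination of vectors of paths in `G(i, k)`. A path visits every
node at most once, hence traverses every edge at most once, in the direction prescribed by
`G(i, k)`: up to the sign of that direction its flows are `0` or `1`. So the vectors of paths in
`G(i, k)` become vertices of a cube, and a vertex of a cube is no convex combination of others.
Finally, the vector determines the path. -/

lemma wireX_ne_wireY (w : List ℕ) (j : ℕ) : wireX w j ≠ wireY w j :=
  (stateAbove w j).injective.ne (Nat.succ_ne_self _).symm

lemma otherWire_ne {w : List ℕ} {j r : ℕ} (h : NodeOnWire w j r) : otherWire w j r ≠ r := by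
  grind [wireX_ne_wireY, otherWire, NodeOnWire]

lemma otherWire_otherWire {w : List ℕ} {j r : ℕ} (h : NodeOnWire w j r) :
    otherWire w j (otherWire w j r) = r := by
  grind [wireX_ne_wireY, otherWire, NodeOnWire]

lemma nodeOnWire_iff_of_nodeOnWire {w : List ℕ} {j r s : ℕ} (h : NodeOnWire w j r) :
    NodeOnWire w j s ↔ s = r ∨ s = otherWire w j r := by
  grind [otherWire, NodeOnWire]

lemma mem_nodesOn {w : List ℕ} {r j : ℕ} :
    j ∈ nodesOn w r ↔ ValidNode w j ∧ NodeOnWire w j r := by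
  simp only [nodesOn, ValidNode, List.mem_filter, List.mem_map, List.mem_range, decide_eq_true_eq]
  refine and_congr_left fun _ => ⟨?_, fun h => ⟨j - 1, by omega, by omega⟩⟩
  rintro ⟨a, ha, rfl⟩
  omega

lemma mem_segList {w : List ℕ} {r a b j : ℕ} :
    j ∈ segList w r a b ↔ (ValidNode w j ∧ NodeOnWire w j r) ∧ min a b < j ∧ j < max a b := by
  simp only [segList, List.mem_filter, mem_nodesOn, decide_eq_true_eq]

lemma mem_tailList {w : List ℕ} {r a j : ℕ} :
    j ∈ tailList w r a ↔ (ValidNode w j ∧ NodeOnWire w j r) ∧ a < j := by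
  simp only [tailList, List.mem_filter, mem_nodesOn, decide_eq_true_eq]

/-! ### Rigorous paths as travels from below the diagram -/

lemma segList_length_succ {w : List ℕ} {r m : ℕ} (hm : ValidNode w m) :
    segList w r (w.length + 1) m = tailList w r m := by
  refine List.filter_congr fun j hj => decide_eq_decide.2 ?_
  have := (mem_nodesOn.1 hj).1
  grind [ValidNode]

/-- A rigorous path starts like a travel that has just switched to `ℓ_k` at a fictitious
node `t_{N+1}` below the diagram, so its first stretch needs no separate treatment. -/
lemma isGPPath_iff {n : ℕ} {w : List ℕ} {k : ℕ} {ms : List ℕ} :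
    IsGPPath n w k ms ↔ (1 ≤ k ∧ k ≤ n) ∧ TravelOK w k k (w.length + 1) ms ∧
      (visitTail w k (w.length + 1) ms).Nodup := by
  cases ms with
  | nil => simp [IsGPPath, TravelOK]
  | cons m ms =>
    by_cases hm : ValidNode w m
    · have hlt : m < w.length + 1 := Nat.lt_succ_of_le hm.2
      simp [IsGPPath, TravelOK, visitList, visitTail, segList_length_succ hm, hlt, and_assoc]
    · simp [IsGPPath, TravelOK, hm]

lemma sublist_visitTail (w : List ℕ) (r a : ℕ) (ms : List ℕ) :
    ms.Sublist (visitTail w r a ms) := by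
  induction ms generalizing r a with
  | nil => exact List.nil_sublist _
  | cons m ms ih => exact ((ih _ _).cons_cons m).trans (List.sublist_append_right _ _)

lemma TravelOK.validNode_of_mem {w : List ℕ} {k r a : ℕ} {ms : List ℕ}
    (ht : TravelOK w k r a ms) {j : ℕ} (hj : j ∈ ms) : ValidNode w j := by
  induction ms generalizing r a with
  | nil => cases hj
  | cons m ms ih =>
    obtain ⟨hm, -, -, -, ht⟩ := ht
    rcases List.mem_cons.1 hj with rfl | hj
    · exact hm
    · exact ih ht hj

/-! ### Coefficients determine the path -/

lemma coeff_nil (w : List ℕ) (r : ℕ) : coeff w r [] = 0 := by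
  ext j
  simp [coeff, pathSwitches]

lemma coeff_cons (w : List ℕ) (r m : ℕ) (ms : List ℕ) :
    coeff w r (m :: ms) =
      Pi.single m (if r < otherWire w m r then 1 else -1) + coeff w (otherWire w m r) ms := by
  ext j
  simp [coeff, pathSwitches, Pi.single_apply, eq_comm]

lemma coeff_eq_zero_of_notMem {w ms : List ℕ} {j : ℕ} (hj : j ∉ ms) (r : ℕ) :
    coeff w r ms j = 0 := by
  induction ms generalizing r with
  | nil => simp [coeff_nil]
  | cons m ms ih =>
    obtain ⟨hjm, hj⟩ := not_or.1 (List.mem_cons.not.1 hj)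
    simp [coeff_cons, ih hj, hjm]

lemma coeff_ne_zero_of_mem {w ms : List ℕ} (hnd : ms.Nodup) {j : ℕ} (hj : j ∈ ms) (r : ℕ) :
    coeff w r ms j ≠ 0 := by
  induction ms generalizing r with
  | nil => cases hj
  | cons m ms ih =>
    obtain ⟨hm, hnd⟩ := List.nodup_cons.1 hnd
    rcases List.mem_cons.1 hj with rfl | hj
    · simp only [coeff_cons, Pi.add_apply, Pi.single_eq_same, coeff_eq_zero_of_notMem hm, add_zero]
      split_ifs <;> norm_num
    · simpa [coeff_cons, ne_of_mem_of_not_mem hj hm] using ih hnd hj _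

lemma mem_iff_coeff_ne_zero {w ms : List ℕ} (hnd : ms.Nodup) {r j : ℕ} :
    j ∈ ms ↔ coeff w r ms j ≠ 0 :=
  ⟨fun hj => coeff_ne_zero_of_mem hnd hj r,
    fun h => by_contra fun hj => h (coeff_eq_zero_of_notMem hj r)⟩

lemma coeff_eq_zero_of_not_validNode {n : ℕ} {w : List ℕ} {p : ℕ × List ℕ} (hp : p ∈ GP n w)
    {j : ℕ} (hj : ¬ ValidNode w j) : coeff w p.1 p.2 j = 0 :=
  coeff_eq_zero_of_notMem (fun hmem => hj ((isGPPath_iff.1 hp).2.1.validNode_of_mem hmem)) _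

lemma coeff_eq_sum_of_normalVec_eq_sum {n : ℕ} {w : List ℕ} (hw : w.length ≤ Dim n)
    {p : ℕ × List ℕ} (hp : p ∈ GP n w) {F : Finset (ℕ × List ℕ)} (hF : ∀ q ∈ F, q ∈ GP n w)
    {c : ℕ × List ℕ → ℝ} (h : normalVec n w p = ∑ q ∈ F, c q • normalVec n w q) :
    coeff w p.1 p.2 = ∑ q ∈ F, c q • coeff w q.1 q.2 := by
  ext j
  simp only [Finset.sum_apply, Pi.smul_apply, smul_eq_mul]
  by_cases hj : ValidNode w j
  · have hj₁ : j - 1 + 1 = j := Nat.sub_add_cancel hj.1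
    have hjN : j - 1 < Dim n := by have := hj.2; omega
    simpa [normalVec, hj₁] using congrFun h ⟨j - 1, hjN⟩
  · rw [coeff_eq_zero_of_not_validNode hp hj]
    refine (Finset.sum_eq_zero fun q hq => ?_).symm
    rw [coeff_eq_zero_of_not_validNode (hF q hq) hj, mul_zero]

lemma mem_segList_or_mem_segList {w : List ℕ} {k r a m m' : ℕ} (hne : m ≠ m')
    (hm : m ∈ nodesOn w r) (hm' : m' ∈ nodesOn w r)
    (hdir : if r ≤ k then m < a else a < m) (hdir' : if r ≤ k then m' < a else a < m') :
    m' ∈ segList w r a m ∨ m ∈ segList w r a m' := by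
  rw [mem_nodesOn] at hm hm'
  simp only [mem_segList, hm, hm', true_and]
  split_ifs at hdir hdir' <;> omega

lemma notMem_segList_of_mem {w : List ℕ} {r a m m' : ℕ} {ms : List ℕ}
    (hnd : (visitTail w r a (m :: ms)).Nodup) (hm' : m' ∈ ms) : m' ∉ segList w r a m :=
  fun hseg => (List.nodup_append.1 hnd).2.2 m' hseg m'
    (List.mem_cons_of_mem _ ((sublist_visitTail w _ m ms).subset hm')) rfl

lemma TravelOK.eq_of_coeff_eq {w : List ℕ} {k r a : ℕ} {ms ms' : List ℕ}
    (ht : TravelOK w k r a ms) (ht' : TravelOK w k r a ms')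
    (hnd : (visitTail w r a ms).Nodup) (hnd' : (visitTail w r a ms').Nodup)
    (h : coeff w r ms = coeff w r ms') : ms = ms' := by
  induction ms generalizing r a ms' with
  | nil =>
    refine (List.eq_nil_iff_forall_not_mem.2 fun j hj => ?_).symm
    rw [mem_iff_coeff_ne_zero (hnd'.sublist (sublist_visitTail ..)), ← h, coeff_nil] at hj
    exact hj rfl
  | cons m ms ih =>
    have mem_iff (j : ℕ) : j ∈ m :: ms ↔ j ∈ ms' := by
      rw [mem_iff_coeff_ne_zero (hnd.sublist (sublist_visitTail ..)), h,
        ← mem_iff_coeff_ne_zero (hnd'.sublist (sublist_visitTail ..))]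
    cases ms' with
    | nil => exact absurd ((mem_iff m).1 List.mem_cons_self) List.not_mem_nil
    | cons m' ms' =>
      obtain ⟨hm, hon, hdir, -, ht⟩ := ht
      obtain ⟨hm', hon', hdir', -, ht'⟩ := ht'
      rcases eq_or_ne m m' with rfl | hne
      · rw [coeff_cons, coeff_cons, add_right_inj] at h
        have tail_nodup {l : List ℕ} (hl : (visitTail w r a (m :: l)).Nodup) :
            (visitTail w (otherWire w m r) m l).Nodup :=
          (List.nodup_append.1 hl).2.1.of_cons
        rw [ih ht ht' (tail_nodup hnd) (tail_nodup hnd') h]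
      · have hmem' : m' ∈ ms :=
          (List.mem_cons.1 ((mem_iff m').2 List.mem_cons_self)).resolve_left hne.symm
        have hmem : m ∈ ms' :=
          (List.mem_cons.1 ((mem_iff m).1 List.mem_cons_self)).resolve_left hne
        rcases mem_segList_or_mem_segList hne (mem_nodesOn.2 ⟨hm, hon⟩) (mem_nodesOn.2 ⟨hm', hon'⟩)
          hdir hdir' with hseg | hseg
        · exact absurd hseg (notMem_segList_of_mem hnd hmem')
        · exact absurd hseg (notMem_segList_of_mem hnd' hmem)

lemma eq_of_coeff_eq {n : ℕ} {w : List ℕ} {p q : ℕ × List ℕ} (hp : p ∈ GP n w) (hq : q ∈ GP n w)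
    (hk : p.1 = q.1) (h : coeff w p.1 p.2 = coeff w q.1 q.2) : p = q := by
  obtain ⟨k, ms⟩ := p
  obtain ⟨k', ms'⟩ := q
  obtain rfl : k = k' := hk
  obtain ⟨-, ht, hnd⟩ := isGPPath_iff.1 hp
  obtain ⟨-, ht', hnd'⟩ := isGPPath_iff.1 hq
  exact congrArg (Prod.mk k) (ht.eq_of_coeff_eq ht' hnd hnd' h)

/-! ### The flow along a wire -/

/-- The sign with which `t_j` enters the flow along `ℓ_r`: zero off the wire, and chosen on it so
that a switch at `t_j` from `ℓ_r` to `ℓ_s` contributes `1` to the flow along `ℓ_r` and `-1` to the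
flow along `ℓ_s`. -/
def wireSign (w : List ℕ) (r j : ℕ) : ℝ :=
  if NodeOnWire w j r then (if r < otherWire w j r then 1 else -1) else 0

/-- The flow along `ℓ_r` through its edge between the levels of `t_h` and `t_{h+1}`, as a linear
functional of a coefficient vector: for that of a path it counts the upward minus the downward
traversals of this edge. -/
def flow (w : List ℕ) (r h : ℕ) : (ℕ → ℝ) →ₗ[ℝ] ℝ :=
  ∑ j ∈ Finset.Icc 1 h, wireSign w r j • LinearMap.proj j

lemma flow_apply (w : List ℕ) (r h : ℕ) (x : ℕ → ℝ) :
    flow w r h x = ∑ j ∈ Finset.Icc 1 h, wireSign w r j * x j := by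
  simp [flow]

lemma flow_zero (w : List ℕ) (r : ℕ) (x : ℕ → ℝ) : flow w r 0 x = 0 := by
  simp [flow_apply]

lemma flow_succ (w : List ℕ) (r h : ℕ) (x : ℕ → ℝ) :
    flow w r (h + 1) x = flow w r h x + wireSign w r (h + 1) * x (h + 1) := by
  rw [flow_apply, flow_apply, Finset.sum_Icc_succ_top (Nat.succ_pos h)]

lemma flow_succ_of_not_nodeOnWire {w : List ℕ} {r h : ℕ} (hr : ¬ NodeOnWire w (h + 1) r)
    (x : ℕ → ℝ) : flow w r (h + 1) x = flow w r h x := by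
  simp [flow_succ, wireSign, hr]

lemma eq_of_flow_eq {w : List ℕ} {x y : ℕ → ℝ} {j : ℕ} (hj : ValidNode w j)
    (h : ∀ r, ∀ l ≤ w.length, flow w r l x = flow w r l y) : x j = y j := by
  obtain ⟨j, rfl⟩ : ∃ i, j = i + 1 := ⟨j - 1, (Nat.sub_add_cancel hj.1).symm⟩
  have hon : NodeOnWire w (j + 1) (wireX w (j + 1)) := Or.inl rfl
  have hsign : wireSign w (wireX w (j + 1)) (j + 1) ≠ 0 := by
    rw [wireSign, if_pos hon]
    split_ifs <;> norm_num
  have hsucc := h (wireX w (j + 1)) (j + 1) hj.2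
  rw [flow_succ, flow_succ, h _ j (Nat.le_of_succ_le hj.2), add_right_inj] at hsucc
  exact mul_left_cancel₀ hsign hsucc

lemma wireSign_mul_switchSign {w : List ℕ} {r m : ℕ} (hm : NodeOnWire w m r) (s : ℕ) :
    wireSign w s m * (if r < otherWire w m r then 1 else -1) =
      (if r = s then 1 else 0) - (if otherWire w m r = s then 1 else 0) := by
  have hne := otherWire_ne hm
  have hinv := otherWire_otherWire hm
  have hiff := nodeOnWire_iff_of_nodeOnWire (s := s) hm
  grind [wireSign]

lemma flow_coeff_cons {w : List ℕ} {r m : ℕ} (hm : NodeOnWire w m r) (hm₁ : 1 ≤ m)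
    (s h : ℕ) (ms : List ℕ) :
    flow w s h (coeff w r (m :: ms)) =
      (if m ≤ h then (if r = s then 1 else 0) - (if otherWire w m r = s then 1 else 0) else 0) +
        flow w s h (coeff w (otherWire w m r) ms) := by
  rw [coeff_cons, map_add, flow_apply, ← wireSign_mul_switchSign hm]
  simp [Pi.single_apply, hm₁]

lemma TravelOK.flow_length {w : List ℕ} {k r a : ℕ} {ms : List ℕ} (ht : TravelOK w k r a ms)
    (s : ℕ) :
    flow w s w.length (coeff w r ms) = (if r = s then 1 else 0) - (if k + 1 = s then 1 else 0) := by
  induction ms generalizing r a with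
  | nil => simp [ht.1, coeff_nil]
  | cons m ms ih =>
    obtain ⟨hm, hon, -, -, ht⟩ := ht
    rw [flow_coeff_cons hon hm.1, ih ht, if_pos hm.2]
    ring

lemma flow_length_coeff {n : ℕ} {w : List ℕ} {p : ℕ × List ℕ} (hp : p ∈ GP n w) (r : ℕ) :
    flow w r w.length (coeff w p.1 p.2) =
      (if p.1 = r then 1 else 0) - (if p.1 + 1 = r then 1 else 0) :=
  (isGPPath_iff.1 hp).2.1.flow_length r

/-- The flows at the bottom of a path in `G(i, k)` form the simple root `e_k - e_{k+1}`;
partial sums pair it with the fundamental coweights. -/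
lemma sum_flow_length_coeff {n : ℕ} {w : List ℕ} {p : ℕ × List ℕ} (hp : p ∈ GP n w) (K : ℕ) :
    ∑ r ∈ Finset.range (K + 1), flow w r w.length (coeff w p.1 p.2) =
      if p.1 = K then 1 else 0 := by
  simp only [flow_length_coeff hp, Finset.sum_sub_distrib, Finset.sum_ite_eq, Finset.mem_range]
  grind

/-! ### Paths traverse each edge at most once -/

/-- The orientation of `ℓ_r` in `G(i, k)`: `1` for upward, `-1` for downward. -/
def orientation (k r : ℕ) : ℝ := if r ≤ k then 1 else -1

lemma orientation_ne_zero (k r : ℕ) : orientation k r ≠ 0 := by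
  rw [orientation]
  split_ifs <;> norm_num

/-- The level of the edge of `ℓ_r` that leads into `t_j` in `G(i, k)`: just below `t_j` if `ℓ_r`
is oriented upward, just above it otherwise. Level `h` lies between `t_h` and `t_{h+1}`. -/
def entryLevel (k r j : ℕ) : ℕ := if r ≤ k then j else j - 1

/-- The number of times a travel along `ℓ_r` from `t_a`, with switching nodes `ms`, enters the node
`t_j` along the wire `ℓ_s`. -/
def entries (w : List ℕ) (s j : ℕ) : ℕ → ℕ → List ℕ → ℕ
  | r, a, [] => if r = s ∧ j ∈ tailList w r a then 1 else 0
  | r, a, m :: ms =>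
      (if r = s ∧ (j ∈ segList w r a m ∨ j = m) then 1 else 0) +
        entries w s j (otherWire w m r) m ms

lemma entries_le_count_visitTail (w : List ℕ) (s j r a : ℕ) (ms : List ℕ) :
    entries w s j r a ms ≤ (visitTail w r a ms).count j := by
  induction ms generalizing r a with
  | nil =>
    rw [entries, visitTail]
    split_ifs with h
    · exact List.count_pos_iff.2 h.2
    · exact Nat.zero_le _
  | cons m ms ih =>
    rw [entries, visitTail, List.count_append, List.count_cons]
    have hseg : j ∈ segList w r a m → 0 < (segList w r a m).count j := List.count_pos_iff.2
    have htail := ih (otherWire w m r) m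
    grind

lemma orientation_mul_indicator_sub {w : List ℕ} {k r a m j : ℕ} (hj : j ∈ nodesOn w r)
    (hdir : if r ≤ k then m < a else a < m) :
    orientation k r * ((if m ≤ entryLevel k r j then 1 else 0) -
      if a ≤ entryLevel k r j then 1 else 0) =
      if j ∈ segList w r a m ∨ j = m then 1 else 0 := by
  rw [mem_nodesOn] at hj
  have hj₁ := hj.1.1
  simp only [mem_segList, hj, and_self, true_and, orientation, entryLevel]
  grind

/-- The correction on the left-hand side accounts for the switch at `t_a` onto `ℓ_r`, which is not
recorded in `ms`: it would add `-1` to the flow along `ℓ_r` at all levels below `t_a`. -/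
lemma TravelOK.orientation_mul_flow {w : List ℕ} {k r a s j : ℕ} {ms : List ℕ}
    (ht : TravelOK w k r a ms) (hj : ValidNode w j) (hjs : NodeOnWire w j s) :
    orientation k s * (flow w s (entryLevel k s j) (coeff w r ms) -
      if r = s ∧ a ≤ entryLevel k s j then 1 else 0) = entries w s j r a ms := by
  induction ms generalizing r a with
  | nil =>
    obtain ⟨rfl, -⟩ := ht
    have hj₁ := hj.1
    rw [coeff_nil, map_zero, entries]
    rcases eq_or_ne (k + 1) s with rfl | hne
    · have hlevel : a ≤ j - 1 ↔ a < j := by omega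
      simp only [orientation, entryLevel, mem_tailList, hj, hjs, hlevel, true_and, and_self,
        Nat.not_succ_le_self, if_false]
      split_ifs <;> norm_num
    · simp [hne]
  | cons m ms ih =>
    obtain ⟨hm, hon, hdir, -, ht⟩ := ht
    rw [flow_coeff_cons hon hm.1, entries, Nat.cast_add, ← ih ht]
    push_cast
    rcases eq_or_ne r s with rfl | hne
    · have hstretch := orientation_mul_indicator_sub (mem_nodesOn.2 ⟨hj, hjs⟩) hdir
      simp only [true_and, ← hstretch, otherWire_ne hon, false_and, if_true, if_false]
      split_ifs <;> ring
    · simp only [hne, false_and, if_false]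
      grind

lemma orientation_mul_flow_entryLevel_mem {n : ℕ} {w : List ℕ} {p : ℕ × List ℕ}
    (hp : p ∈ GP n w) {r j : ℕ} (hj : ValidNode w j) (hjr : NodeOnWire w j r) :
    orientation p.1 r * flow w r (entryLevel p.1 r j) (coeff w p.1 p.2) ∈ ({0, 1} : Set ℝ) := by
  obtain ⟨-, ht, hnd⟩ := isGPPath_iff.1 hp
  have hstart : ¬ w.length + 1 ≤ entryLevel p.1 r j := by
    grind [entryLevel, ValidNode]
  have hflow := ht.orientation_mul_flow hj hjr
  rw [if_neg fun h => hstart h.2, sub_zero] at hflow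
  have hle : entries w r j p.1 (w.length + 1) p.2 ≤ 1 :=
    (entries_le_count_visitTail ..).trans (List.nodup_iff_count_le_one.1 hnd j)
  rw [hflow]
  interval_cases entries w r j p.1 (w.length + 1) p.2 <;> simp

/-- An edge not leading into a node carries the same flow as the next edge of its wire, so one can
move along the wire, in its orientation, to a node or to the end of the wire. -/
lemma orientation_mul_flow_mem {n : ℕ} {w : List ℕ} {p : ℕ × List ℕ} (hp : p ∈ GP n w)
    (r : ℕ) {h : ℕ} (hh : h ≤ w.length) :
    orientation p.1 r * flow w r h (coeff w p.1 p.2) ∈ ({0, 1} : Set ℝ) := by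
  by_cases hr : r ≤ p.1
  · induction h with
    | zero => simp [flow_zero]
    | succ h ih =>
      by_cases hon : NodeOnWire w (h + 1) r
      · simpa [entryLevel, hr] using orientation_mul_flow_entryLevel_mem hp ⟨Nat.succ_pos h, hh⟩ hon
      · rw [flow_succ_of_not_nodeOnWire hon]
        exact ih (Nat.le_of_succ_le hh)
  · induction hh using Nat.decreasingInduction with
    | self =>
      rw [flow_length_coeff hp, if_neg (by omega), orientation, if_neg hr]
      split_ifs <;> simp
    | of_succ h hh ih =>
      by_cases hon : NodeOnWire w (h + 1) r
      · simpa [entryLevel, hr] using orientation_mul_flow_entryLevel_mem hp ⟨Nat.succ_pos h, hh⟩ hon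
      · rwa [flow_succ_of_not_nodeOnWire hon] at ih

lemma eq_of_flow_coeff_eq {n : ℕ} {w : List ℕ} {p q : ℕ × List ℕ} (hp : p ∈ GP n w)
    (hq : q ∈ GP n w) (hk : p.1 = q.1)
    (h : ∀ r, ∀ l ≤ w.length, flow w r l (coeff w p.1 p.2) = flow w r l (coeff w q.1 q.2)) :
    p = q := by
  refine eq_of_coeff_eq hp hq hk (funext fun j => ?_)
  by_cases hj : ValidNode w j
  · exact eq_of_flow_eq hj h
  · rw [coeff_eq_zero_of_not_validNode hp hj, coeff_eq_zero_of_not_validNode hq hj]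

/-! ### Nonnegative combinations -/

section NonnegCombination

variable {ι : Type*} {F : Finset ι} {c : ι → ℝ}

lemma eq_of_indicator_eq_sum {κ : Type*} [DecidableEq κ] {b : ι → κ} {a : κ}
    (hc : ∀ q ∈ F, 0 ≤ c q)
    (h : ∀ K, (if a = K then 1 else 0) = ∑ q ∈ F, c q * if b q = K then 1 else 0)
    {q : ι} (hq : q ∈ F) (hcq : c q ≠ 0) : b q = a := by
  by_contra hne
  have hsum := h (b q)
  rw [if_neg (Ne.symm hne), eq_comm, Finset.sum_eq_zero_iff_of_nonneg fun s hs =>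
    mul_nonneg (hc s hs) (by split_ifs <;> norm_num)] at hsum
  exact hcq (by simpa using hsum q hq)

lemma sum_eq_one_of_indicator_eq_sum {κ : Type*} [DecidableEq κ] {b : ι → κ} {a : κ}
    (hc : ∀ q ∈ F, 0 ≤ c q)
    (h : ∀ K, (if a = K then 1 else 0) = ∑ q ∈ F, c q * if b q = K then 1 else 0) :
    ∑ q ∈ F, c q = 1 := by
  rw [← if_pos (c := a = a) (t := (1 : ℝ)) (e := 0) rfl, h a]
  refine Finset.sum_congr rfl fun q hq => ?_
  rcases eq_or_ne (c q) 0 with hcq | hcq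
  · rw [hcq, zero_mul]
  · rw [if_pos (eq_of_indicator_eq_sum hc h hq hcq), mul_one]

lemma eq_of_eq_sum_of_mem_zero_one {g : ι → ℝ} {a : ℝ} (hc : ∀ q ∈ F, 0 ≤ c q)
    (hc₁ : ∑ q ∈ F, c q = 1) (hg : ∀ q ∈ F, c q ≠ 0 → g q ∈ Set.Icc 0 1)
    (ha : a ∈ ({0, 1} : Set ℝ)) (h : a = ∑ q ∈ F, c q * g q)
    {q : ι} (hq : q ∈ F) (hcq : c q ≠ 0) : g q = a := by
  have hbounds : ∀ s ∈ F, 0 ≤ c s * g s ∧ c s * g s ≤ c s := fun s hs => by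
    rcases eq_or_ne (c s) 0 with hcs | hcs
    · simp [hcs]
    · obtain ⟨h₀, h₁⟩ := hg s hs hcs
      exact ⟨mul_nonneg (hc s hs) h₀, mul_le_of_le_one_right (hc s hs) h₁⟩
  rcases ha with rfl | rfl
  · have hzero := (Finset.sum_eq_zero_iff_of_nonneg fun s hs => (hbounds s hs).1).1 h.symm q hq
    exact (mul_eq_zero.1 hzero).resolve_left hcq
  · have hall := (Finset.sum_eq_sum_iff_of_le fun s hs => (hbounds s hs).2).1
      (h.symm.trans hc₁.symm) q hq
    exact (mul_eq_left₀ hcq).1 hall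

end NonnegCombination

lemma flow_coeff_eq_sum {w : List ℕ} {p : ℕ × List ℕ} {F : Finset (ℕ × List ℕ)}
    {c : ℕ × List ℕ → ℝ} (h : coeff w p.1 p.2 = ∑ q ∈ F, c q • coeff w q.1 q.2) (r l : ℕ) :
    flow w r l (coeff w p.1 p.2) = ∑ q ∈ F, c q * flow w r l (coeff w q.1 q.2) := by
  simp only [h, map_sum, map_smul, smul_eq_mul]

lemma indicator_eq_sum_of_coeff_eq_sum {n : ℕ} {w : List ℕ} {p : ℕ × List ℕ} (hp : p ∈ GP n w)
    {F : Finset (ℕ × List ℕ)} (hF : ∀ q ∈ F, q ∈ GP n w) {c : ℕ × List ℕ → ℝ}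
    (h : coeff w p.1 p.2 = ∑ q ∈ F, c q • coeff w q.1 q.2) (K : ℕ) :
    (if p.1 = K then 1 else 0) = ∑ q ∈ F, c q * if q.1 = K then 1 else 0 := by
  simp only [← sum_flow_length_coeff hp, flow_coeff_eq_sum h]
  rw [Finset.sum_comm]
  refine Finset.sum_congr rfl fun q hq => ?_
  rw [← Finset.mul_sum, sum_flow_length_coeff (hF q hq)]

theorem statement4_general (n : ℕ) (w : List ℕ) :
    ∀ p ∈ GP n w, ¬ ∃ (F : Finset (ℕ × List ℕ)) (c : (ℕ × List ℕ) → ℝ),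
      (∀ q ∈ F, q ∈ GP n w ∧ q ≠ p) ∧ (∀ q ∈ F, 0 ≤ c q) ∧
      coeff w p.1 p.2 = ∑ q ∈ F, c q • coeff w q.1 q.2 := by
  rintro p hp ⟨F, c, hF, hc, hsum⟩
  have hGP : ∀ q ∈ F, q ∈ GP n w := fun q hq => (hF q hq).1
  have hindicator := indicator_eq_sum_of_coeff_eq_sum hp hGP hsum
  have hlevel : ∀ q ∈ F, c q ≠ 0 → q.1 = p.1 := fun q => eq_of_indicator_eq_sum hc hindicator
  have hone : ∑ q ∈ F, c q = 1 := sum_eq_one_of_indicator_eq_sum hc hindicator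
  obtain ⟨q, hq, hcq⟩ : ∃ q ∈ F, c q ≠ 0 :=
    Finset.exists_ne_zero_of_sum_ne_zero (hone ▸ one_ne_zero)
  refine (hF q hq).2 (eq_of_flow_coeff_eq (hGP q hq) hp (hlevel q hq hcq) fun r h hh => ?_)
  have hIcc : ∀ s ∈ F, c s ≠ 0 →
      orientation p.1 r * flow w r h (coeff w s.1 s.2) ∈ Set.Icc 0 1 := fun s hs hcs => by
    rw [← hlevel s hs hcs]
    exact Set.pair_subset (Set.left_mem_Icc.2 zero_le_one) (Set.right_mem_Icc.2 zero_le_one)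
      (orientation_mul_flow_mem (hGP s hs) r hh)
  refine mul_left_cancel₀ (orientation_ne_zero p.1 r) (eq_of_eq_sum_of_mem_zero_one hc hone hIcc
    (orientation_mul_flow_mem hp r hh) ?_ hq hcq)
  rw [flow_coeff_eq_sum hsum, Finset.mul_sum]
  exact Finset.sum_congr rfl fun s _ => mul_left_comm _ _ _

/-- Lemma on facet normals of the string cone.
No primitive inward normal vector of a string inequality of `C_i` is contained in the
convex cone generated by the normal vectors of the other string inequalities. -/
theorem statement4 (n : ℕ) (hn : 1 ≤ n) (i : List ℕ) (hi : IsReduced n i) :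
    ∀ p ∈ GP n i, ¬ ∃ (F : Finset (ℕ × List ℕ)) (c : (ℕ × List ℕ) → ℝ),
      (∀ q ∈ F, q ∈ GP n i ∧ q ≠ p) ∧ (∀ q, 0 ≤ c q) ∧
      normalVec n i p = ∑ q ∈ F, c q • normalVec n i q := by
  rintro p hp ⟨F, c, hF, hc, hsum⟩
  exact statement4_general n i p hp ⟨F, c, hF, fun q _ => hc q,
    coeff_eq_sum_of_normalVec_eq_sum hi.1.le hp (fun q hq => (hF q hq).1) hsum⟩

end StringPolytope
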